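/- For every positive integer n, V_n(τ_n) ≥ exp( (n(n−1)/2)·log n + n² ∫₀¹ x log(1−x) dx ), i.e. V_n(τ_n) ≥ n^{n(n−1)/2} · e^{−3n²/4}. -/

import Mathlib

/-!
Grouping the factors of `∏_{i<j} (j - i)` by `j` shows that `V_n(τ_n) = ∏_{k<n} k!`
(`vmd_tauv`). The bound `log (∏_{k<n} k!) ≥ (n(n-1)/2) log n - 3n²/4` follows by induction on `n`
(`main_bound`): the left side grows by `log n!`, which is at least `n log n - n` because
`nⁿ / n! ≤ eⁿ`, while the right side grows by
`(n(n+1)/2) log (1 + 1/n) + n log n - 3n/2 - 3/4 ≤ n log n - n - 1/4` because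
`log (1 + 1/n) ≤ 1/n`. Both displayed inequalities are this one, once
`∫₀¹ x log (1 - x) dx = -3/4` is known (`integral_mul_log_one_sub`).
-/

noncomputable section

/-- The Vandermonde determinant `∏_{i<j} (x i - x j)`. -/
def vmd (n : ℕ) (x : Fin n → ℝ) : ℝ :=
  ∏ p ∈ Finset.univ.filter (fun p : Fin n × Fin n => p.1 < p.2), (x p.1 - x p.2)

/-- `τ_n = ((n-1)/2, (n-3)/2, …, -(n-1)/2)`. -/
def tauv (n : ℕ) : Fin n → ℝ := fun i => ((n : ℝ) - 1) / 2 - (i.val : ℝ)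

open Finset

lemma vmd_tauv (n : ℕ) : vmd n (tauv n) = ∏ k ∈ range n, (k.factorial : ℝ) := by
  unfold vmd tauv
  rw [Finset.prod_filter, Fintype.prod_prod_type_right]
  rw [← Fin.prod_univ_eq_prod_range (fun k => (k.factorial : ℝ)) n]
  refine Finset.prod_congr rfl fun j _ => ?_
  have h1 : ∀ i : Fin n, (if i < j then ((n : ℝ) - 1) / 2 - (i.val : ℝ) -
      (((n : ℝ) - 1) / 2 - (j.val : ℝ)) else 1) =
      (fun i : ℕ => if i < j.val then ((j.val : ℝ) - i) else 1) i.val := by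
    intro i
    simp only [Fin.lt_def]
    split_ifs <;> ring
  simp only [h1]
  rw [Fin.prod_univ_eq_prod_range (fun i : ℕ => if i < j.val then ((j.val : ℝ) - i) else 1) n,
    ← Finset.prod_filter]
  have h2 : (range n).filter (fun i => i < j.val) = range j.val := by
    ext i
    have := j.isLt
    simp only [mem_filter, mem_range]
    omega
  rw [h2, ← Finset.prod_range_add_one_eq_factorial, ← Finset.prod_range_reflect]
  push_cast
  refine Finset.prod_congr rfl fun i hi => ?_
  have hi := mem_range.1 hi
  have : j.val - 1 - i + 1 + i = j.val := by omega
  have hcast : ((j.val - 1 - i : ℕ) : ℝ) + 1 + i = j.val := by exact_mod_cast this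
  linarith

lemma integral_mul_log_one_sub :
    ∫ x in (0 : ℝ)..(1 : ℝ), x * Real.log (1 - x) = -3 / 4 := by
  have h := intervalIntegral.integral_comp_sub_left (a := 0) (b := 1)
    (fun x : ℝ => (1 - x) * Real.log x) 1
  simp only [sub_sub_cancel, sub_self, sub_zero] at h
  rw [h]
  -- The antiderivative is written through `x * log x`, which is continuous at `0`.
  rw [intervalIntegral.integral_eq_sub_of_hasDerivAt_of_le (a := 0) (b := 1) zero_le_one
    (f := fun x : ℝ => (1 - x / 2) * (x * Real.log x) - x + x ^ 2 / 4)]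
  · norm_num
  · have := Real.continuous_mul_log
    exact Continuous.continuousOn (by fun_prop)
  · intro x hx
    have hx0 : x ≠ 0 := hx.1.ne'
    have h1 := (((hasDerivAt_id x).div_const 2).const_sub 1).mul (Real.hasDerivAt_mul_log hx0)
    have h2 := (h1.sub (hasDerivAt_id x)).add (((hasDerivAt_id x).pow 2).div_const 4)
    refine (h2.congr_deriv ?_).congr_of_eventuallyEq (Filter.Eventually.of_forall fun y => ?_)
    · simp
      ring
    · simp
  · exact intervalIntegral.intervalIntegrable_log'.continuousOn_mul
      (Continuous.continuousOn (by fun_prop))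

lemma log_factorial_ge (n : ℕ) :
    (n : ℝ) * Real.log n - n ≤ Real.log (n.factorial : ℝ) := by
  rcases Nat.eq_zero_or_pos n with rfl | hn
  · simp
  have hn' : (0 : ℝ) < n := by exact_mod_cast hn
  have hf : (0 : ℝ) < n.factorial := by exact_mod_cast n.factorial_pos
  have h := Real.log_le_log (by positivity) (Real.pow_div_factorial_le_exp (n : ℝ) hn'.le n)
  rw [Real.log_exp, Real.log_div (by positivity) hf.ne', Real.log_pow] at h
  linarith

lemma main_bound (n : ℕ) :
    (n : ℝ) * (n - 1) / 2 * Real.log n - 3 * (n : ℝ) ^ 2 / 4 ≤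
      ∑ k ∈ range n, Real.log (k.factorial : ℝ) := by
  induction n with
  | zero => simp
  | succ n ih =>
    rw [sum_range_succ]
    have h1 := log_factorial_ge n
    have h2 : (n : ℝ) * (n + 1) / 2 * (Real.log (n + 1) - Real.log n) ≤ (n + 1) / 2 := by
      rcases Nat.eq_zero_or_pos n with rfl | hn
      · simp
      have hn' : (0 : ℝ) < n := by exact_mod_cast hn
      have h3 := Real.log_le_sub_one_of_pos (show (0 : ℝ) < (n + 1) / n by positivity)
      rw [Real.log_div (by positivity) hn'.ne'] at h3
      calc (n : ℝ) * (n + 1) / 2 * (Real.log (n + 1) - Real.log n)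
          ≤ (n : ℝ) * (n + 1) / 2 * ((n + 1) / n - 1) := by gcongr
        _ = (n + 1) / 2 := by field_simp; ring
    push_cast
    nlinarith

/-- For every positive integer `n`,
`V_n(τ_n) ≥ exp((n(n−1)/2) log n + n² ∫₀¹ x log(1−x) dx)`, i.e.
`V_n(τ_n) ≥ n^{n(n−1)/2} e^{−3n²/4}`. -/
theorem stmt_10 (n : ℕ) (hn : 0 < n) :
    Real.exp (((n * (n - 1) / 2 : ℕ) : ℝ) * Real.log n +
        (n : ℝ) ^ 2 * ∫ x in (0 : ℝ)..(1 : ℝ), x * Real.log (1 - x)) ≤ vmd n (tauv n) ∧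
      (n : ℝ) ^ (n * (n - 1) / 2) * Real.exp (-(3 * (n : ℝ) ^ 2) / 4) ≤ vmd n (tauv n) := by
  have hn' : (0 : ℝ) < n := by exact_mod_cast hn
  have hc : ((n * (n - 1) / 2 : ℕ) : ℝ) = (n : ℝ) * (n - 1) / 2 := by
    rw [Nat.cast_div (Nat.even_mul_pred_self n).two_dvd (by norm_num)]
    push_cast [Nat.cast_sub (show 1 ≤ n from hn)]
    ring
  have hv : vmd n (tauv n) = Real.exp (∑ k ∈ range n, Real.log (k.factorial : ℝ)) := by
    rw [vmd_tauv, Real.exp_sum]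
    refine Finset.prod_congr rfl fun k _ => ?_
    rw [Real.exp_log (by exact_mod_cast k.factorial_pos)]
  have hb := main_bound n
  constructor
  · rw [hv, integral_mul_log_one_sub, hc]
    apply Real.exp_le_exp.2
    linarith
  · rw [hv, ← Real.exp_log (pow_pos hn' _), Real.log_pow, ← Real.exp_add, hc]
    apply Real.exp_le_exp.2
    linarith
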